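/- Every rotation of four-dimensional Euclidean space is a pair of Clifford translations: for every real-linear isometry f : ℍ → ℍ with determinant 1, there exist unit quaternions a and b such that f(x) = a * x * b for all x ∈ ℍ; moreover the pair (a,b) is unique up to replacing it by (−a,−b). (This is Klein's description, based on Clifford's twists, of the group of direct isometries of elliptic 3-space.) -/

import Mathlib

open Quaternion

namespace Quaternion

open Submodule

/-- The reflection in the hyperplane orthogonal to a unit quaternion `u` is
`x ↦ -(u * star x * u)`. -/
theorem reflection_orthogonal_span_singleton {u : ℍ[ℝ]} (hu : ‖u‖ = 1) (x : ℍ[ℝ]) :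
    reflection (ℝ ∙ u)ᗮ x = -(u * star x * u) := by
  have h : u * star x + x * star u = ((2 * inner ℝ u x : ℝ) : ℍ[ℝ]) := by
    rw [inner_def, ← self_add_star', star_mul, star_star]
  have hu' : star u * u = 1 := by
    rw [star_mul_self, normSq_eq_norm_mul_self, hu, one_mul, coe_one]
  rw [reflection_orthogonal_apply, reflection_singleton_apply, eq_sub_of_add_eq h, sub_mul,
    mul_assoc x, hu', mul_one, hu, coe_mul_eq_smul]
  simp [two_smul, add_smul, two_mul]

/-- The line spanned by a nonzero quaternion is spanned by a unit quaternion. -/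
theorem exists_norm_eq_one_span_singleton_eq {v : ℍ[ℝ]} (hv : v ≠ 0) :
    ∃ u : ℍ[ℝ], ‖u‖ = 1 ∧ (ℝ ∙ u) = ℝ ∙ v :=
  ⟨‖v‖⁻¹ • v, norm_smul_inv_norm hv,
    span_singleton_smul_eq (inv_ne_zero (norm_ne_zero_iff.2 hv)).isUnit v⟩

theorem det_reflection_orthogonal_span_singleton {v : ℍ[ℝ]} (hv : v ≠ 0) :
    LinearMap.det (reflection (ℝ ∙ v)ᗮ).toLinearMap = -1 := by
  rw [det_reflection, orthogonal_orthogonal, finrank_span_singleton hv, pow_one]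

/-- A product of hyperplane reflections of the quaternions is `x ↦ a * x * b` or
`x ↦ a * star x * b`, according to its determinant. -/
theorem exists_eq_mul_mul_of_prod_reflections (l : List ℍ[ℝ]) :
    ∃ a b : ℍ[ℝ], ‖a‖ = 1 ∧ ‖b‖ = 1 ∧
      ((LinearMap.det (l.map fun v ↦ reflection (ℝ ∙ v)ᗮ).prod.toLinearMap = 1 ∧
          ∀ x, (l.map fun v ↦ reflection (ℝ ∙ v)ᗮ).prod x = a * x * b) ∨
        (LinearMap.det (l.map fun v ↦ reflection (ℝ ∙ v)ᗮ).prod.toLinearMap = -1 ∧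
          ∀ x, (l.map fun v ↦ reflection (ℝ ∙ v)ᗮ).prod x = a * star x * b)) := by
  induction l with
  | nil => exact ⟨1, 1, norm_one, norm_one, .inl ⟨LinearMap.det_id, by simp⟩⟩
  | cons v l ih =>
    rw [List.map_cons, List.prod_cons]
    set φ := (l.map fun v ↦ reflection (ℝ ∙ v)ᗮ).prod
    obtain rfl | hv := eq_or_ne v 0
    · have h : reflection (ℝ ∙ (0 : ℍ[ℝ]))ᗮ = 1 := by
        ext1 x
        simpa using! reflection_mem_subspace_eq_self (mem_top (x := x))
      rwa [h, one_mul]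
    obtain ⟨u, hu, huv⟩ := exists_norm_eq_one_span_singleton_eq hv
    have hdet : LinearMap.det (reflection (ℝ ∙ v)ᗮ * φ).toLinearMap
        = -LinearMap.det φ.toLinearMap := by
      rw [← neg_one_mul, ← det_reflection_orthogonal_span_singleton hv, ← LinearMap.det_comp]
      rfl
    have happ (x : ℍ[ℝ]) : (reflection (ℝ ∙ v)ᗮ * φ) x = -(u * star (φ x) * u) := by
      simp only [LinearIsometryEquiv.coe_mul, Function.comp_apply, ← huv,
        reflection_orthogonal_span_singleton hu]
    rw [hdet]
    simp only [happ]
    obtain ⟨a, b, ha, hb, h⟩ := ih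
    refine ⟨-(u * star b), star a * u, by simp [hu, hb], by simp [hu, ha], ?_⟩
    obtain ⟨hd, h⟩ | ⟨hd, h⟩ := h
    · exact .inr ⟨by rw [hd], fun x ↦ by simp [h, mul_assoc]⟩
    · exact .inl ⟨by rw [hd, neg_neg], fun x ↦ by simp [h, mul_assoc]⟩

/-- A quaternion commuting with every quaternion is real. -/
theorem eq_coe_re_of_forall_commute {c : ℍ[ℝ]} (hc : ∀ x, Commute c x) : c = c.re := by
  let i : ℍ[ℝ] := ⟨0, 1, 0, 0⟩
  let j : ℍ[ℝ] := ⟨0, 0, 1, 0⟩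
  have hI : (c * j).imK = (j * c).imK := by rw [(hc j).eq]
  have hJ : (c * i).imK = (i * c).imK := by rw [(hc i).eq]
  have hK : (c * i).imJ = (i * c).imJ := by rw [(hc i).eq]
  rw [imK_mul, imK_mul] at hI hJ
  rw [imJ_mul, imJ_mul] at hK
  simp only [i, j] at hI hJ hK
  apply Quaternion.ext
  · rw [re_coe]
  · rw [imI_coe]
    linarith
  · rw [imJ_coe]
    linarith
  · rw [imK_coe]
    linarith

/-- The unit quaternions `a`, `b` are determined by `x ↦ a * x * b` up to a common sign. -/
theorem eq_or_eq_neg_of_forall_mul_mul_eq {a b a' b' : ℍ[ℝ]} (ha : ‖a‖ = 1) (hb : ‖b‖ = 1)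
    (ha' : ‖a'‖ = 1) (h : ∀ x, a * x * b = a' * x * b') :
    (a' = a ∧ b' = b) ∨ (a' = -a ∧ b' = -b) := by
  have hb₀ : b ≠ 0 := norm_ne_zero_iff.1 (hb ▸ one_ne_zero)
  have ha₀' : a' ≠ 0 := norm_ne_zero_iff.1 (ha' ▸ one_ne_zero)
  have h₁ : b' = a'⁻¹ * a * b := by
    rw [mul_assoc, eq_inv_mul_iff_mul_eq₀ ha₀']
    simpa using (h 1).symm
  have hc (x : ℍ[ℝ]) : Commute (a'⁻¹ * a) x := by
    apply mul_left_cancel₀ ha₀'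
    apply mul_right_cancel₀ hb₀
    simpa [h₁, mul_assoc, ha₀'] using h x
  have hre := eq_coe_re_of_forall_commute hc
  have habs : |(a'⁻¹ * a).re| = 1 := by
    rw [← Real.norm_eq_abs, ← norm_coe, ← hre, norm_mul, norm_inv, ha, ha', inv_one, one_mul]
  obtain hr | hr := eq_or_eq_neg_of_abs_eq habs
  · rw [hr, coe_one] at hre
    exact .inl ⟨(inv_mul_eq_one₀ ha₀').1 hre, by rw [h₁, hre, one_mul]⟩
  · rw [hr, coe_neg, coe_one] at hre
    refine .inr ⟨?_, by rw [h₁, hre, neg_one_mul]⟩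
    rw [inv_mul_eq_iff_eq_mul₀ ha₀', mul_neg_one] at hre
    rw [hre, neg_neg]

end Quaternion

/-- Every rotation of four-dimensional Euclidean space is a pair of Clifford
translations: every real-linear isometry `f : ℍ → ℍ` with determinant `1` has the form
`x ↦ a * x * b` for unit quaternions `a`, `b`, unique up to replacing `(a, b)` by
`(-a, -b)`.  This is Klein's description, based on Clifford's twists, of the group of
direct isometries of elliptic 3-space. -/
theorem rotation_of_quaternions_eq_pair_of_clifford_translations
    (f : ℍ[ℝ] →ₗᵢ[ℝ] ℍ[ℝ]) (hdet : LinearMap.det f.toLinearMap = 1) :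
    ∃ a b : ℍ[ℝ], ‖a‖ = 1 ∧ ‖b‖ = 1 ∧ (∀ x : ℍ[ℝ], f x = a * x * b) ∧
      ∀ a' b' : ℍ[ℝ], ‖a'‖ = 1 → ‖b'‖ = 1 → (∀ x : ℍ[ℝ], f x = a' * x * b') →
        (a' = a ∧ b' = b) ∨ (a' = -a ∧ b' = -b) := by
  let φ : ℍ[ℝ] ≃ₗᵢ[ℝ] ℍ[ℝ] := f.toLinearIsometryEquiv rfl
  obtain ⟨l, -, hl⟩ := φ.reflections_generate_dim
  obtain ⟨a, b, ha, hb, h⟩ := exists_eq_mul_mul_of_prod_reflections l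
  rw [← hl] at h
  have hφ : LinearMap.det φ.toLinearMap = 1 := hdet
  obtain ⟨-, h⟩ | ⟨hd, -⟩ := h
  · exact ⟨a, b, ha, hb, h, fun a' b' ha' _ h' ↦
      eq_or_eq_neg_of_forall_mul_mul_eq ha hb ha' fun x ↦ (h x).symm.trans (h' x)⟩
  · norm_num [hφ] at hd
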